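/- Let R be a subset of a commutative ring, let k, l, m > 2, let a ∈ R^k be a λ-quiddity cycle, b ∈ R^l a λ′-quiddity cycle and c ∈ R^m a λ″-quiddity cycle, and let σ ∈ D_{l+m−2}. Then either a ⊕ (b ⊕ c)^σ ∼ (a ⊕ c^{τ₁})^{τ₂} ⊕ b for some τ₁ ∈ D_m and τ₂ ∈ D_{k+m−2}, or a ⊕ (b ⊕ c)^σ ∼ (a ⊕ b^{τ₁})^{τ₂} ⊕ c for some τ₁ ∈ D_l and τ₂ ∈ D_{k+l−2}. -/

import Mathlib

open Matrix

/-- The 2×2 matrix `[[x, -1], [1, 0]]` associated to an entry of a quiddity cycle. -/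
def qMat {R : Type*} [CommRing R] (x : R) : Matrix (Fin 2) (Fin 2) R := !![x, -1; 1, 0]

/-- `c` is a `lam`-quiddity cycle: the product `∏ [[cₜ,−1],[1,0]]` equals `lam • Id`. -/
def IsQC {R : Type*} [CommRing R] (lam : R) (c : List R) : Prop :=
  (c.map qMat).prod = lam • (1 : Matrix (Fin 2) (Fin 2) R)

/-- `a ⊕ b = (a₁+b_l, a₂, …, a_{k−1}, a_k+b₁, b₂, …, b_{l−1})`. -/
def oplus {R : Type*} [CommRing R] (a b : List R) : List R :=
  (a.head?.getD 0 + b.getLast?.getD 0) ::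
    ((a.drop 1).dropLast ++ (a.getLast?.getD 0 + b.head?.getD 0) :: (b.drop 1).dropLast)

/-- Dihedral equivalence: `a` is a cyclic rotation of `b` or of the reversal of `b`,
i.e. `a = b^σ` for some `σ` in the dihedral group acting on `n` points. -/
def DihEquiv {α : Type*} (a b : List α) : Prop :=
  ∃ i : ℕ, a = b.rotate i ∨ a = b.reverse.rotate i

/-- The action of a dihedral group element, encoded by a rotation amount and a reversal flag. -/
def applyDih {α : Type*} (p : ℕ × Bool) (c : List α) : List α :=
  if p.2 then c.reverse.rotate p.1 else c.rotate p.1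

/-!
Read `a ⊕ b` as gluing two polygons along the edge joining their last to their first vertex, the
labels of the identified vertices being added. In `a ⊕ (b ⊕ c)^σ` the polygon `a` is glued along a
boundary edge of `b ⊕ c`. Such an edge is an edge of `b` or of `c`, and in either case one may glue
`a` to that polygon first and attach the other one afterwards. Reversing `b` and `c` simultaneously
reduces the case of a reflection `σ` to that of a rotation.
-/

section Lists

variable {α : Type*}

lemma exists_eq_cons_append_singleton {l : List α} (hl : 2 ≤ l.length) :
    ∃ x m y, l = x :: (m ++ [y]) := by
  obtain _ | ⟨x, t⟩ := l
  · simp at hl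
  obtain rfl | ⟨m, y, rfl⟩ := List.eq_nil_or_concat t
  · simp at hl
  · exact ⟨x, m, y, by simp⟩

lemma modifyHead_append_of_ne_nil (f : α → α) {l : List α} (hl : l ≠ []) (m : List α) :
    (l ++ m).modifyHead f = l.modifyHead f ++ m := by
  cases l with
  | nil => contradiction
  | cons x t => rfl

lemma modifyLast_ne_nil (f : α → α) {l : List α} (hl : l ≠ []) : l.modifyLast f ≠ [] := by
  obtain rfl | ⟨m, y, rfl⟩ := List.eq_nil_or_concat l
  · contradiction
  · simp [List.modifyLast_concat]

lemma modifyHead_modifyLast_comm {f g : α → α} (h : Function.Commute f g) (l : List α) :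
    (l.modifyLast g).modifyHead f = (l.modifyHead f).modifyLast g := by
  obtain _ | ⟨x, t⟩ := l
  · rfl
  obtain rfl | ⟨m, y, rfl⟩ := List.eq_nil_or_concat t
  · exact congrArg (fun z => [z]) (h x)
  · have hne : x :: m ≠ [] := List.cons_ne_nil x m
    rw [List.concat_eq_append, ← List.cons_append, List.modifyLast_concat,
      modifyHead_append_of_ne_nil f hne, modifyHead_append_of_ne_nil f hne,
      List.modifyLast_concat]

lemma exists_append_of_isRotated_cons_append_cons {p q : α} {B C e : List α}
    (he : p :: (B ++ q :: C) ~r e) :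
    (∃ U V, B = U ++ V ∧ e = V ++ q :: C ++ p :: U) ∨
      (∃ U V, C = U ++ V ∧ e = V ++ p :: B ++ q :: U) := by
  obtain ⟨n, hn, rfl⟩ := List.isRotated_iff_mod.mp he
  obtain ⟨u, v, huv, hvu⟩ : ∃ u v, u ++ v = p :: (B ++ q :: C) ∧
      (p :: (B ++ q :: C)).rotate n = v ++ u :=
    ⟨_, _, List.take_append_drop n _, List.rotate_eq_drop_append_take hn⟩
  rw [hvu]
  obtain _ | ⟨u₀, U⟩ := u
  · exact .inr ⟨C, [], by simp, by simpa using huv⟩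
  obtain ⟨rfl, hUv⟩ := List.cons.inj huv
  obtain ⟨V, rfl, rfl⟩ | ⟨W, rfl, hW⟩ := List.append_eq_append_iff.mp hUv
  · exact .inl ⟨U, V, rfl, rfl⟩
  obtain _ | ⟨w₀, U⟩ := W
  · obtain rfl : q :: C = v := hW
    exact .inl ⟨B, [], by simp, by simp⟩
  · obtain ⟨rfl, rfl⟩ := List.cons.inj hW
    exact .inr ⟨U, v, rfl, by simp⟩

end Lists

section DihEquiv

variable {α : Type*} {a b c : List α}

lemma dihEquiv_iff_isRotated : DihEquiv a b ↔ a ~r b ∨ a ~r b.reverse := by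
  rw [List.isRotated_comm, List.isRotated_comm (l := a)]
  simp only [DihEquiv, exists_or, List.IsRotated, eq_comm]

lemma dihEquiv_iff_exists_applyDih : DihEquiv a b ↔ ∃ σ, a = applyDih σ b := by
  simp [DihEquiv, applyDih, exists_or]

lemma dihEquiv_applyDih (σ : ℕ × Bool) (a : List α) : DihEquiv (applyDih σ a) a :=
  dihEquiv_iff_exists_applyDih.mpr ⟨σ, rfl⟩

lemma DihEquiv.of_isRotated (h : a ~r b) : DihEquiv a b :=
  dihEquiv_iff_isRotated.mpr (.inl h)

lemma DihEquiv.reverse_left (h : DihEquiv a b) : DihEquiv a.reverse b := by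
  rw [dihEquiv_iff_isRotated] at h ⊢
  simpa [List.isRotated_reverse_comm_iff, or_comm] using h

lemma DihEquiv.of_reverse_right (h : DihEquiv a b.reverse) : DihEquiv a b := by
  rw [dihEquiv_iff_isRotated, List.reverse_reverse] at h
  exact dihEquiv_iff_isRotated.mpr h.symm

lemma DihEquiv.trans_isRotated (hab : DihEquiv a b) (hbc : b ~r c) : DihEquiv a c := by
  rw [dihEquiv_iff_isRotated] at hab ⊢
  exact hab.imp (·.trans hbc) (·.trans hbc.reverse)

lemma DihEquiv.length_eq (h : DihEquiv a b) : a.length = b.length := by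
  obtain h | h := dihEquiv_iff_isRotated.mp h <;> simpa using h.perm.length_eq

end DihEquiv

section Oplus

variable {R : Type*} [CommRing R]

lemma two_le_length_oplus (a b : List R) : 2 ≤ (oplus a b).length := by
  simp only [oplus, List.length_cons, List.length_append]
  lia

lemma oplus_cons_append_singleton (p q s t : R) (A D : List R) :
    oplus (p :: (A ++ [q])) (s :: (D ++ [t])) = (p + t) :: (A ++ (q + s) :: D) := by
  simp [oplus, List.getLast?_cons, List.getLast?_append]

lemma oplus_comm_isRotated {a b : List R} (ha : 2 ≤ a.length) (hb : 2 ≤ b.length) :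
    oplus a b ~r oplus b a := by
  obtain ⟨p, A, q, rfl⟩ := exists_eq_cons_append_singleton ha
  obtain ⟨s, D, t, rfl⟩ := exists_eq_cons_append_singleton hb
  rw [oplus_cons_append_singleton, oplus_cons_append_singleton, add_comm p t, add_comm q s]
  exact List.isRotated_append (l := (t + p) :: A)

lemma reverse_oplus_isRotated {a b : List R} (ha : 2 ≤ a.length) (hb : 2 ≤ b.length) :
    (oplus a b).reverse ~r oplus a.reverse b.reverse := by
  obtain ⟨p, A, q, rfl⟩ := exists_eq_cons_append_singleton ha
  obtain ⟨s, D, t, rfl⟩ := exists_eq_cons_append_singleton hb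
  simpa [oplus_cons_append_singleton] using
    List.isRotated_append (l := D.reverse) (l' := (q + s) :: (A.reverse ++ [p + t]))

lemma append_oplus {U V : List R} (hU : U ≠ []) (hV : V ≠ []) (z w : R) (C : List R) :
    oplus (U ++ V) (z :: (C ++ [w])) =
      U.modifyHead (· + w) ++ V.modifyLast (· + z) ++ C := by
  obtain ⟨x, U, rfl⟩ := List.exists_cons_of_ne_nil hU
  obtain rfl | ⟨V, y, rfl⟩ := List.eq_nil_or_concat V
  · contradiction
  · simpa [List.modifyLast_concat] using oplus_cons_append_singleton x y z w (U ++ V) C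

lemma oplus_append_isRotated {U V : List R} (hU : U ≠ []) (hV : V ≠ []) (p q : R) (A : List R) :
    oplus (p :: (A ++ [q])) (V ++ U) ~r
      U.modifyLast (· + p) ++ A ++ V.modifyHead (· + q) := by
  have hVU : 2 ≤ (V ++ U).length := by
    have := List.length_pos_iff.mpr hU
    have := List.length_pos_iff.mpr hV
    simp only [List.length_append]
    lia
  refine (oplus_comm_isRotated (by simp) hVU).trans ?_
  rw [append_oplus hV hU, List.append_assoc]
  exact List.isRotated_append

lemma oplus_modify_isRotated_oplus {U V : List R} (hU : U ≠ []) (hV : V ≠ [])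
    (p q z w : R) (A C : List R) :
    oplus (p :: (A ++ [q])) (V.modifyLast (· + z) ++ C ++ U.modifyHead (· + w)) ~r
      oplus (U.modifyLast (· + p) ++ A ++ V.modifyHead (· + q)) (z :: (C ++ [w])) := by
  have hU' : U.modifyLast (· + p) ≠ [] := modifyLast_ne_nil _ hU
  have hV' : V.modifyLast (· + z) ≠ [] := modifyLast_ne_nil _ hV
  -- The two gluing edges share a vertex if `U` or `V` is a singleton; its label gets both summands.
  have hcomm (s t : R) : Function.Commute (· + s) (· + t) := fun r => add_right_comm r t s
  calc oplus (p :: (A ++ [q])) (V.modifyLast (· + z) ++ C ++ U.modifyHead (· + w))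
    _ ~r (U.modifyHead (· + w)).modifyLast (· + p) ++ A ++
          (V.modifyLast (· + z) ++ C).modifyHead (· + q) :=
        oplus_append_isRotated (by simpa using hU) (by simp [hV']) p q A
    _ = (U.modifyLast (· + p)).modifyHead (· + w) ++
          (A ++ V.modifyHead (· + q)).modifyLast (· + z) ++ C := by
        rw [modifyHead_append_of_ne_nil _ hV', modifyHead_modifyLast_comm (hcomm q z),
          modifyHead_modifyLast_comm (hcomm w p),
          List.modifyLast_append_of_right_ne_nil _ _ _ (by simpa using hV)]
        simp only [List.append_assoc]
    _ = oplus (U.modifyLast (· + p) ++ A ++ V.modifyHead (· + q)) (z :: (C ++ [w])) := by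
        rw [List.append_assoc (U.modifyLast _), append_oplus hU' (by simp [hV])]

lemma exists_append_of_oplus_isRotated {x y z w : R} {B C e : List R}
    (he : oplus (x :: (B ++ [y])) (z :: (C ++ [w])) ~r e) :
    (∃ U V, U ≠ [] ∧ V ≠ [] ∧ x :: (B ++ [y]) = U ++ V ∧
        e = V.modifyLast (· + z) ++ C ++ U.modifyHead (· + w)) ∨
      (∃ U V, U ≠ [] ∧ V ≠ [] ∧ z :: (C ++ [w]) = U ++ V ∧
        e = V.modifyLast (· + x) ++ B ++ U.modifyHead (· + y)) := by
  rw [oplus_cons_append_singleton] at he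
  refine (exists_append_of_isRotated_cons_append_cons he).imp ?_ ?_
  · rintro ⟨U, V, rfl, rfl⟩
    exact ⟨x :: U, V ++ [y], by simp, by simp, by simp, by simp [List.modifyLast_concat]⟩
  · rintro ⟨U, V, rfl, rfl⟩
    exact ⟨z :: U, V ++ [w], by simp, by simp, by simp,
      by simp [List.modifyLast_concat, add_comm]⟩

end Oplus

section IsIteratedSum

variable {R : Type*} [CommRing R] {a b c d e : List R}

/-- `d ∼ (a ⊕ b^{τ₁})^{τ₂} ⊕ c` for some dihedral elements `τ₁` and `τ₂`: the cycle `d` arises from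
`a` by gluing on first `b` and then `c`. -/
def IsIteratedSum (a b c d : List R) : Prop :=
  ∃ τ₁ τ₂ : ℕ × Bool, DihEquiv d (oplus (applyDih τ₂ (oplus a (applyDih τ₁ b))) c)

lemma isIteratedSum_iff :
    IsIteratedSum a b c d ↔
      ∃ b' f, DihEquiv b' b ∧ DihEquiv f (oplus a b') ∧ DihEquiv d (oplus f c) := by
  constructor
  · rintro ⟨τ₁, τ₂, hd⟩
    exact ⟨_, _, dihEquiv_applyDih τ₁ b, dihEquiv_applyDih τ₂ _, hd⟩
  · rintro ⟨b', f, hb', hf, hd⟩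
    obtain ⟨τ₁, rfl⟩ := dihEquiv_iff_exists_applyDih.mp hb'
    obtain ⟨τ₂, rfl⟩ := dihEquiv_iff_exists_applyDih.mp hf
    exact ⟨τ₁, τ₂, hd⟩

lemma IsIteratedSum.of_reverse (hc : 2 ≤ c.length)
    (h : IsIteratedSum a b.reverse c.reverse d) : IsIteratedSum a b c d := by
  obtain ⟨b', f, hb', hf, hd⟩ := isIteratedSum_iff.mp h
  have hf_length : 2 ≤ f.reverse.length := by
    rw [List.length_reverse, hf.length_eq]
    exact two_le_length_oplus a b'
  have hfc : oplus f c.reverse ~r (oplus f.reverse c).reverse := by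
    simpa using (reverse_oplus_isRotated hf_length hc).symm
  exact isIteratedSum_iff.mpr
    ⟨b', f.reverse, hb'.of_reverse_right, hf.reverse_left,
      (hd.trans_isRotated hfc).of_reverse_right⟩

lemma isIteratedSum_oplus_modify (ha : 2 ≤ a.length) {U V : List R} (hU : U ≠ []) (hV : V ≠ [])
    (z w : R) (C : List R) :
    IsIteratedSum a (U ++ V) (z :: (C ++ [w]))
      (oplus a (V.modifyLast (· + z) ++ C ++ U.modifyHead (· + w))) := by
  obtain ⟨p, A, q, rfl⟩ := exists_eq_cons_append_singleton ha
  exact isIteratedSum_iff.mpr ⟨V ++ U, _, .of_isRotated List.isRotated_append,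
    .of_isRotated (oplus_append_isRotated hU hV p q A).symm,
    .of_isRotated (oplus_modify_isRotated_oplus hU hV p q z w A C)⟩

lemma isIteratedSum_or_of_oplus_isRotated (ha : 2 ≤ a.length) (hb : 2 ≤ b.length)
    (hc : 2 ≤ c.length) (he : oplus b c ~r e) :
    IsIteratedSum a c b (oplus a e) ∨ IsIteratedSum a b c (oplus a e) := by
  obtain ⟨x, B, y, rfl⟩ := exists_eq_cons_append_singleton hb
  obtain ⟨z, C, w, rfl⟩ := exists_eq_cons_append_singleton hc
  obtain ⟨U, V, hU, hV, hb_eq, rfl⟩ | ⟨U, V, hU, hV, hc_eq, rfl⟩ :=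
    exists_append_of_oplus_isRotated he
  · rw [hb_eq]
    exact .inr (isIteratedSum_oplus_modify ha hU hV z w C)
  · rw [hc_eq]
    exact .inl (isIteratedSum_oplus_modify ha hU hV x y B)

end IsIteratedSum

theorem stmt5_general {R : Type*} [CommRing R] (a b c : List R)
    (ha : 2 ≤ a.length) (hb : 2 ≤ b.length) (hc : 2 ≤ c.length) (σ : ℕ × Bool) :
    (∃ τ₁ τ₂ : ℕ × Bool,
        DihEquiv (oplus a (applyDih σ (oplus b c)))
          (oplus (applyDih τ₂ (oplus a (applyDih τ₁ c))) b)) ∨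
    (∃ τ₁ τ₂ : ℕ × Bool,
        DihEquiv (oplus a (applyDih σ (oplus b c)))
          (oplus (applyDih τ₂ (oplus a (applyDih τ₁ b))) c)) := by
  change IsIteratedSum a c b _ ∨ IsIteratedSum a b c _
  obtain hrot | hrefl := dihEquiv_iff_isRotated.mp (dihEquiv_applyDih σ (oplus b c))
  · exact isIteratedSum_or_of_oplus_isRotated ha hb hc hrot.symm
  · have hrev : oplus b.reverse c.reverse ~r applyDih σ (oplus b c) :=
      (hrefl.trans (reverse_oplus_isRotated hb hc)).symm
    exact (isIteratedSum_or_of_oplus_isRotated ha (by simpa using hb) (by simpa using hc) hrev).imp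
      (.of_reverse hb) (.of_reverse hc)

/-- For quiddity cycles `a`, `b`, `c` of lengths `k, l, m > 2` and any dihedral element `σ`,
either `a ⊕ (b ⊕ c)^σ ∼ (a ⊕ c^{τ₁})^{τ₂} ⊕ b` or `a ⊕ (b ⊕ c)^σ ∼ (a ⊕ b^{τ₁})^{τ₂} ⊕ c`
for suitable dihedral elements `τ₁`, `τ₂`. -/
theorem stmt5 {R : Type*} [CommRing R] (lam lam' lam'' : R)
    (h : lam = 1 ∨ lam = -1) (h' : lam' = 1 ∨ lam' = -1) (h'' : lam'' = 1 ∨ lam'' = -1)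
    (a b c : List R) (ha : 2 < a.length) (hb : 2 < b.length) (hc : 2 < c.length)
    (hqa : IsQC lam a) (hqb : IsQC lam' b) (hqc : IsQC lam'' c)
    (σ : ℕ × Bool) :
    (∃ τ₁ τ₂ : ℕ × Bool,
        DihEquiv (oplus a (applyDih σ (oplus b c)))
          (oplus (applyDih τ₂ (oplus a (applyDih τ₁ c))) b)) ∨
    (∃ τ₁ τ₂ : ℕ × Bool,
        DihEquiv (oplus a (applyDih σ (oplus b c)))
          (oplus (applyDih τ₂ (oplus a (applyDih τ₁ b))) c)) :=
  stmt5_general a b c ha.le hb.le hc.le σ
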